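/- arXiv:math/0501416 — 2 statements merged into one kernel-verified Lean document; each statement's English description precedes it below -/
import Mathlib

section
/- Let A and B be lattices with a least element. Then the order dual of A ⊠ B is order-isomorphic to the box product Aᵈ □ Bᵈ of the order duals Aᵈ and Bᵈ of A and B. -/
section Defs

variable (A B : Type*) [Lattice A] [Lattice B]

/-- `a □ b = {(x,y) : x ≤ a or y ≤ b}`. -/
def boxe (a : A) (b : B) : Set (A × B) := {p | p.1 ≤ a ∨ p.2 ≤ b}

/-- The box product `A □ B`: all finite nonempty intersections `⋂ (aᵢ □ bᵢ)`. -/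
def boxProd : Set (Set (A × B)) :=
  {H | ∃ F : Finset (A × B), F.Nonempty ∧ H = ⋂ p ∈ F, boxe A B p.1 p.2}

/-- `⊥_{A,B} = (A × ⊥_B) ∪ (⊥_A × B)`, where `⊥_L` is `{0_L}` if `L` has a least
element `0_L` and `∅` otherwise. -/
def botPairs : Set (A × B) := {p | IsBot p.1 ∨ IsBot p.2}

/-- `a ⊠ b = {(x,y) : x ≤ a and y ≤ b} ∪ ⊥_{A,B}`. -/
def btimes (a : A) (b : B) : Set (A × B) := {p | p.1 ≤ a ∧ p.2 ≤ b} ∪ botPairs A B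

/-- The lattice tensor product `A ⊠ B`: the confined elements of `A □ B`. -/
def ltens : Set (Set (A × B)) :=
  {H | H ∈ boxProd A B ∧ ∃ (a : A) (b : B), H ⊆ btimes A B a b}

end Defs

/-!
The relation `a ≤ x ∨ b ≤ y` between `(a, b) ∈ A × B` and `(x, y) ∈ Aᵈ × Bᵈ` says both
`(a, b) ∈ x □ y` and `(x, y) ∈ a □ b`, so the elements of `A □ B` and of `Aᵈ □ Bᵈ` are closed for
the Galois connection it induces, and it remains to see that the polars exchange `A ⊠ B` and
`Aᵈ □ Bᵈ`. The polar of `a ⊠ b` is the dual box `a □ b`, so the polar of a finite union of sets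
`a ⊠ b` lies in `Aᵈ □ Bᵈ`; and every element of `A ⊠ B` is such a union, because
`(a ⊠ b) ∩ (c □ d) = ((a ⊓ c) ⊠ b) ∪ (a ⊠ (b ⊓ d))`. The same applies to the duals, where the
presence of top elements makes confinement automatic.
-/

open Order OrderDual

section PureTensors

variable (A B : Type*) [Lattice A] [Lattice B]

/-- The finite nonempty unions of pure lattice tensors `a ⊠ b`, a presentation of the elements of
`A ⊠ B` from which their polars can be read off. As in `boxProd`, a `Finset` collects the pairs
`(a, b)`. -/
def btimesUnions : Set (Set (A × B)) :=
  {H | ∃ F : Finset (A × B), F.Nonempty ∧ H = ⋃ p ∈ F, btimes A B p.1 p.2}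

variable {A B}

lemma btimes_inter_boxe (a c : A) (b d : B) :
    btimes A B a b ∩ boxe A B c d = btimes A B (a ⊓ c) b ∪ btimes A B a (b ⊓ d) := by
  ext ⟨x, y⟩
  have hx : IsBot x → x ≤ c := fun h => h c
  have hy : IsBot y → y ≤ d := fun h => h d
  simp only [btimes, boxe, botPairs, Set.mem_inter_iff, Set.mem_union, Set.mem_ofPred_eq,
    le_inf_iff]
  tauto

lemma inter_boxe_mem_btimesUnions {H : Set (A × B)} (hH : H ∈ btimesUnions A B) (c : A) (d : B) :
    H ∩ boxe A B c d ∈ btimesUnions A B := by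
  classical
  obtain ⟨F, hF, rfl⟩ := hH
  refine ⟨F.image (fun p => (p.1 ⊓ c, p.2)) ∪ F.image (fun p => (p.1, p.2 ⊓ d)),
    (hF.image _).inl, ?_⟩
  simp only [Set.iUnion₂_inter, btimes_inter_boxe, Set.iUnion_union_distrib,
    Finset.set_biUnion_union, Finset.set_biUnion_finset_image]

lemma btimes_inter_iInter_boxe_mem_btimesUnions (a : A) (b : B) (F : Finset (A × B)) :
    btimes A B a b ∩ ⋂ p ∈ F, boxe A B p.1 p.2 ∈ btimesUnions A B := by
  classical
  induction F using Finset.induction_on with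
  | empty => exact ⟨{(a, b)}, Finset.singleton_nonempty _, by simp⟩
  | insert p F _ ih =>
    rw [Finset.set_biInter_insert, Set.inter_comm (boxe A B p.1 p.2), ← Set.inter_assoc]
    exact inter_boxe_mem_btimesUnions ih p.1 p.2

lemma ltens_subset_btimesUnions : ltens A B ⊆ btimesUnions A B := by
  rintro _ ⟨⟨F, -, rfl⟩, a, b, hab⟩
  rw [← Set.inter_eq_right.2 hab]
  exact btimes_inter_iInter_boxe_mem_btimesUnions a b F

lemma boxProd_subset_ltens [OrderTop A] [OrderTop B] : boxProd A B ⊆ ltens A B :=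
  fun _ hH => ⟨hH, ⊤, ⊤, fun _ _ => Or.inl ⟨le_top, le_top⟩⟩

lemma exists_forall_mk_mem_left {H : Set (A × B)} (hH : H ∈ boxProd A B) :
    ∃ a, ∀ y, (a, y) ∈ H := by
  obtain ⟨F, hF, rfl⟩ := hH
  exact ⟨F.inf' hF Prod.fst, fun y => Set.mem_iInter₂.2 fun _ hp => Or.inl (F.inf'_le _ hp)⟩

lemma exists_forall_mk_mem_right {H : Set (A × B)} (hH : H ∈ boxProd A B) :
    ∃ b, ∀ x, (x, b) ∈ H := by
  obtain ⟨F, hF, rfl⟩ := hH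
  exact ⟨F.inf' hF Prod.snd, fun x => Set.mem_iInter₂.2 fun _ hp => Or.inr (F.inf'_le _ hp)⟩

end PureTensors

section Polars

variable {A B : Type*} [Lattice A] [Lattice B]

/-- The relation between `A × B` and `Aᵈ × Bᵈ` whose polars give the isomorphism: `p` lies in the
box of `q`, or equivalently `q` lies in the box of `p` formed in the duals. As `Aᵒᵈᵒᵈ` is `A` by
definition, its converse is the same relation for `Aᵈ` and `Bᵈ`. -/
def boxRel (p : A × B) (q : Aᵒᵈ × Bᵒᵈ) : Prop :=
  p.1 ≤ ofDual q.1 ∨ p.2 ≤ ofDual q.2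

lemma lowerPolar_boxRel_singleton (a : A) (b : B) :
    lowerPolar boxRel {(toDual a, toDual b)} = boxe A B a b :=
  Set.ext fun _ => mem_lowerPolar_singleton _

lemma isExtent_boxRel_of_mem_boxProd {H : Set (A × B)} (hH : H ∈ boxProd A B) :
    IsExtent boxRel H := by
  obtain ⟨F, -, rfl⟩ := hH
  exact .iInter₂ _ fun p _ => ⟨_, lowerPolar_boxRel_singleton p.1 p.2⟩

lemma isIntent_boxRel_of_mem_boxProd {K : Set (Aᵒᵈ × Bᵒᵈ)} (hK : K ∈ boxProd Aᵒᵈ Bᵒᵈ) :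
    IsIntent boxRel K :=
  isExtent_boxRel_of_mem_boxProd (A := Aᵒᵈ) (B := Bᵒᵈ) hK

lemma upperPolar_boxRel_btimes (a : A) (b : B) :
    upperPolar boxRel (btimes A B a b) = boxe Aᵒᵈ Bᵒᵈ (toDual a) (toDual b) := by
  ext q
  refine ⟨fun hq => hq (a := (a, b)) (Or.inl ⟨le_rfl, le_rfl⟩), fun hq p hp => ?_⟩
  rcases hp with ⟨hpa, hpb⟩ | hbot | hbot
  · exact hq.imp hpa.trans hpb.trans
  · exact Or.inl (hbot _)
  · exact Or.inr (hbot _)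

lemma upperPolar_boxRel_mem_boxProd {H : Set (A × B)} (hH : H ∈ btimesUnions A B) :
    upperPolar boxRel H ∈ boxProd Aᵒᵈ Bᵒᵈ := by
  classical
  obtain ⟨F, hF, rfl⟩ := hH
  refine ⟨F.image (Prod.map toDual toDual), hF.image _, ?_⟩
  simp only [upperPolar_iUnion₂, upperPolar_boxRel_btimes, Finset.set_biInter_finset_image,
    Prod.map_fst, Prod.map_snd]

lemma lowerPolar_boxRel_mem_boxProd {K : Set (Aᵒᵈ × Bᵒᵈ)} (hK : K ∈ btimesUnions Aᵒᵈ Bᵒᵈ) :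
    lowerPolar boxRel K ∈ boxProd A B :=
  upperPolar_boxRel_mem_boxProd (A := Aᵒᵈ) (B := Bᵒᵈ) hK

variable [OrderBot A] [OrderBot B]

lemma lowerPolar_boxRel_subset_btimes {K : Set (Aᵒᵈ × Bᵒᵈ)} {a : A} {b : B}
    (ha : (toDual a, ⊤) ∈ K) (hb : (⊤, toDual b) ∈ K) :
    lowerPolar boxRel K ⊆ btimes A B a b := by
  intro p hp
  rcases hp ha with hpa | hbot
  · rcases hp hb with hbot | hpb
    · exact Or.inr (Or.inl (isBot_bot.mono hbot))
    · exact Or.inl ⟨hpa, hpb⟩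
  · exact Or.inr (Or.inr (isBot_bot.mono hbot))

lemma lowerPolar_boxRel_mem_ltens {K : Set (Aᵒᵈ × Bᵒᵈ)} (hK : K ∈ boxProd Aᵒᵈ Bᵒᵈ) :
    lowerPolar boxRel K ∈ ltens A B := by
  obtain ⟨a, ha⟩ := exists_forall_mk_mem_left hK
  obtain ⟨b, hb⟩ := exists_forall_mk_mem_right hK
  exact ⟨lowerPolar_boxRel_mem_boxProd (ltens_subset_btimesUnions (boxProd_subset_ltens hK)),
    ofDual a, ofDual b, lowerPolar_boxRel_subset_btimes (ha ⊤) (hb ⊤)⟩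

end Polars

/-- For lattices `A`, `B` with a least element, the order dual of `A ⊠ B` is
order-isomorphic to the box product `Aᵈ □ Bᵈ` of the order duals. -/
theorem ltens_dual_iso_boxProd_dual
    (A B : Type*) [Lattice A] [OrderBot A] [Lattice B] [OrderBot B] :
    ∃ e : {H // H ∈ ltens A B} ≃ {K // K ∈ boxProd Aᵒᵈ Bᵒᵈ},
      ∀ H K : {H // H ∈ ltens A B}, H.1 ⊆ K.1 ↔ (e K).1 ⊆ (e H).1 := by
  have closed (H : {H // H ∈ ltens A B}) : lowerPolar boxRel (upperPolar boxRel H.1) = H.1 :=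
    (isExtent_boxRel_of_mem_boxProd H.2.1).eq
  refine ⟨⟨fun H => ⟨upperPolar boxRel H.1,
        upperPolar_boxRel_mem_boxProd (ltens_subset_btimesUnions H.2)⟩,
      fun K => ⟨lowerPolar boxRel K.1, lowerPolar_boxRel_mem_ltens K.2⟩,
      fun H => Subtype.ext (closed H),
      fun K => Subtype.ext (isIntent_boxRel_of_mem_boxProd K.2).eq⟩,
    fun H K => ⟨fun hHK => upperPolar_anti boxRel hHK, fun hKH => ?_⟩⟩
  rw [← closed H, ← closed K]
  exact lowerPolar_anti boxRel hKH
end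

section
/- Let A and B be lattices such that A ⊠ B is nonempty. If A and B both have permutable congruences (i.e., θ ∘ ψ = ψ ∘ θ, as composition of binary relations, for all lattice congruences θ, ψ), then the lattice A ⊠ B has permutable congruences. -/
section Defs

variable (A B : Type*) [Lattice A] [Lattice B]

/-- A lattice congruence. -/
def LatCon (L : Type*) [Lattice L] (θ : L → L → Prop) : Prop :=
  Equivalence θ ∧
  ∀ a b c d : L, θ a b → θ c d → θ (a ⊔ c) (b ⊔ d) ∧ θ (a ⊓ c) (b ⊓ d)

/-- A lattice congruence on a poset (which is a lattice), expressed via least upper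
bounds and greatest lower bounds. -/
def PosetLatCon {P : Type*} [PartialOrder P] (θ : P → P → Prop) : Prop :=
  Equivalence θ ∧
  (∀ a b c d s t : P, θ a b → θ c d → IsLUB {a, c} s → IsLUB {b, d} t → θ s t) ∧
  (∀ a b c d s t : P, θ a b → θ c d → IsGLB {a, c} s → IsGLB {b, d} t → θ s t)

end Defs

/-!
Say that a congruence of `A ⊠ B` is basic if it is the intersection of a congruence induced by one
of `A` and a congruence induced by one of `B`. A lattice congruence permuting with two others
permutes with their intersection, by the majority term, so basic congruences permute as soon as the
induced ones do. The latter is checked on chains `H ≤ J ≤ K`: the finitely many points generating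
`K` are moved into `H` one congruence at a time, in the opposite order.

Joins of pairwise permuting families permute, so it remains to write a congruence `Θ` as the join of
the basic congruences below it. Let `H ≤ K` be congruent modulo `Θ` and let `(x, y)` be a point of
`K`. A tensor `X` containing `(x, y)`, all of whose points outside `H` lie below `(x, y)`, is cut
down into `H` by intersecting it with the boxes `a □ b` defining `H`. Each cut only matters on the
rectangle `[a ⊓ x, x] × [b ⊓ y, y]`, where the corners `(x, b ⊓ y)` and `(a ⊓ x, y)` force `(x, y)`
modulo `Θ`. With one interval fixed, the intervals having this property are those of a congruence of
the other factor, so the cut is congruent to `X` modulo a basic congruence below `Θ`.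
-/

/-! ### Permuting congruences -/

section Congruences

variable {L X Y : Type*}

namespace LatCon

variable [Lattice L] {θ ψ : L → L → Prop} {a b c d : L}

theorem refl (hθ : LatCon L θ) (a : L) : θ a a := hθ.1.refl a

theorem symm (hθ : LatCon L θ) (h : θ a b) : θ b a := hθ.1.symm h

theorem trans (hθ : LatCon L θ) (hab : θ a b) (hbc : θ b c) : θ a c := hθ.1.trans hab hbc

theorem sup_congr (hθ : LatCon L θ) (hab : θ a b) (hcd : θ c d) : θ (a ⊔ c) (b ⊔ d) :=
  (hθ.2 a b c d hab hcd).1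

theorem inf_congr (hθ : LatCon L θ) (hab : θ a b) (hcd : θ c d) : θ (a ⊓ c) (b ⊓ d) :=
  (hθ.2 a b c d hab hcd).2

theorem dual (hθ : LatCon L θ) : LatCon Lᵒᵈ θ :=
  ⟨hθ.1, fun _ _ _ _ hab hcd => ⟨hθ.inf_congr hab hcd, hθ.sup_congr hab hcd⟩⟩

theorem onFun {M F : Type*} [Lattice M] [FunLike F M L] [LatticeHomClass F M L]
    (hθ : LatCon L θ) (f : F) : LatCon M (Function.onFun θ f) :=
  ⟨hθ.1.comap f, fun a b c d hab hcd => by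
    simpa only [Function.onFun, map_sup, map_inf] using hθ.2 (f a) (f b) (f c) (f d) hab hcd⟩

theorem iInter {ι : Sort*} {θ : ι → L → L → Prop} (hθ : ∀ i, LatCon L (θ i)) :
    LatCon L fun a b => ∀ i, θ i a b :=
  ⟨⟨fun a i => (hθ i).refl a, fun h i => (hθ i).symm (h i),
      fun h h' i => (hθ i).trans (h i) (h' i)⟩,
    fun _ _ _ _ h h' => ⟨fun i => (hθ i).sup_congr (h i) (h' i),
      fun i => (hθ i).inf_congr (h i) (h' i)⟩⟩

theorem inf (hθ : LatCon L θ) (hψ : LatCon L ψ) : LatCon L (θ ⊓ ψ) :=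
  ⟨⟨fun a => ⟨hθ.refl a, hψ.refl a⟩, fun h => ⟨hθ.symm h.1, hψ.symm h.2⟩,
      fun h h' => ⟨hθ.trans h.1 h'.1, hψ.trans h.2 h'.2⟩⟩,
    fun _ _ _ _ h h' => ⟨⟨hθ.sup_congr h.1 h'.1, hψ.sup_congr h.2 h'.2⟩,
      ⟨hθ.inf_congr h.1 h'.1, hψ.inf_congr h.2 h'.2⟩⟩⟩

theorem le_of_forall_le (hθ : LatCon L θ) (hψ : LatCon L ψ)
    (h : ∀ a b, a ≤ b → θ a b → ψ a b) : θ ≤ ψ := fun a b hab =>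
  hψ.trans (h a (a ⊔ b) le_sup_left (by simpa only [sup_idem] using hθ.sup_congr (hθ.refl a) hab))
    (hψ.symm (h b (a ⊔ b) le_sup_right
      (by simpa only [sup_idem] using hθ.sup_congr (hθ.symm hab) (hθ.refl b))))

theorem exists_forall_of_monotone {ι : Type*} (hθ : LatCon L θ) {Q : ι → L → Prop}
    (hQ : ∀ i, Monotone (Q i)) (s : Finset ι) (h : ∀ i ∈ s, ∃ b, θ a b ∧ Q i b) :
    ∃ b, θ a b ∧ ∀ i ∈ s, Q i b := by
  classical
  induction s using Finset.induction_on with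
  | empty => exact ⟨a, hθ.refl a, by simp⟩
  | insert i s _ ih =>
    obtain ⟨b, hab, hb⟩ := ih fun j hj => h j (Finset.mem_insert_of_mem hj)
    obtain ⟨c, hac, hc⟩ := h i (Finset.mem_insert_self i s)
    refine ⟨b ⊔ c, by simpa only [sup_idem] using hθ.sup_congr hab hac, ?_⟩
    exact (Finset.forall_mem_insert _ _ _).2
      ⟨hQ i le_sup_right hc, fun j hj => hQ j le_sup_left (hb j hj)⟩

theorem exists_forall_of_antitone {ι : Type*} (hθ : LatCon L θ) {Q : ι → L → Prop}
    (hQ : ∀ i, Antitone (Q i)) (s : Finset ι) (h : ∀ i ∈ s, ∃ b, θ a b ∧ Q i b) :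
    ∃ b, θ a b ∧ ∀ i ∈ s, Q i b :=
  hθ.dual.exists_forall_of_monotone (fun i => (hQ i).dual_left) s h

end LatCon

theorem PosetLatCon.latCon [Lattice L] {θ : L → L → Prop} (hθ : PosetLatCon θ) :
    LatCon L θ :=
  ⟨hθ.1, fun _ _ _ _ hab hcd => ⟨hθ.2.1 _ _ _ _ _ _ hab hcd isLUB_pair isLUB_pair,
    hθ.2.2 _ _ _ _ _ _ hab hcd isGLB_pair isGLB_pair⟩⟩

/-- `θ` and `ψ` permute: `θ ∘ ψ = ψ ∘ θ`. -/
def Permute (θ ψ : X → X → Prop) : Prop := Relation.Comp θ ψ = Relation.Comp ψ θ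

/-- Every two congruences of the lattice `L` permute. -/
def PermutableCongruences (L : Type*) [Lattice L] : Prop :=
  ∀ θ ψ, LatCon L θ → LatCon L ψ → Permute θ ψ

theorem permute_iff {θ ψ : X → X → Prop} :
    Permute θ ψ ↔ ∀ a b, (∃ c, θ a c ∧ ψ c b) ↔ ∃ c, ψ a c ∧ θ c b := by
  simp only [Permute, funext_iff, Relation.Comp, eq_iff_iff]

namespace Permute

variable {θ ψ ψ₁ ψ₂ : X → X → Prop}

theorem symm (h : Permute θ ψ) : Permute ψ θ := Eq.symm h

theorem of_le (hθ : ∀ {a b}, θ a b → θ b a) (hψ : ∀ {a b}, ψ a b → ψ b a)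
    (h : Relation.Comp θ ψ ≤ Relation.Comp ψ θ) : Permute θ ψ :=
  le_antisymm h fun a c ⟨b, hab, hbc⟩ =>
    let ⟨d, hcd, hda⟩ := h c a ⟨b, hθ hbc, hψ hab⟩
    ⟨d, hθ hda, hψ hcd⟩

theorem onFun (h : Permute θ ψ) {f : Y → X} (hf : f.Surjective) :
    Permute (Function.onFun θ f) (Function.onFun ψ f) := by
  have comp_onFun (r p : X → X → Prop) : Relation.Comp (Function.onFun r f) (Function.onFun p f) =
      Function.onFun (Relation.Comp r p) f :=
    funext₂ fun a c => propext (hf.exists (p := fun b => r (f a) b ∧ p b (f c))).symm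
  unfold Permute
  rw [comp_onFun, comp_onFun, h]

theorem inf [Lattice X] (hθ : LatCon X θ) (hψ₁ : LatCon X ψ₁) (hψ₂ : LatCon X ψ₂)
    (h₁ : Permute θ ψ₁) (h₂ : Permute θ ψ₂) : Permute θ (ψ₁ ⊓ ψ₂) := by
  refine of_le hθ.symm (hψ₁.inf hψ₂).symm ?_
  rintro a c ⟨b, hab, hbc₁, hbc₂⟩
  obtain ⟨d₁, had₁, hd₁c⟩ := h₁.le a c ⟨b, hab, hbc₁⟩
  obtain ⟨d₂, had₂, hd₂c⟩ := h₂.le a c ⟨b, hab, hbc₂⟩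
  -- The majority term agrees with `a` modulo `ψ₁` and modulo `ψ₂`, and with `c` modulo `θ`.
  refine ⟨a ⊓ d₁ ⊔ d₁ ⊓ d₂ ⊔ d₂ ⊓ a, ⟨?_, ?_⟩, ?_⟩
  · simpa [inf_comm] using hψ₁.sup_congr (hψ₁.sup_congr (hψ₁.inf_congr (hψ₁.refl a) had₁)
      (hψ₁.inf_congr had₁ (hψ₁.refl d₂))) (hψ₁.refl (d₂ ⊓ a))
  · simpa [inf_comm, sup_comm] using hψ₂.sup_congr (hψ₂.sup_congr (hψ₂.refl (a ⊓ d₁))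
      (hψ₂.inf_congr (hψ₂.refl d₁) had₂)) (hψ₂.inf_congr had₂ (hψ₂.refl a))
  · simpa [inf_comm] using hθ.sup_congr (hθ.sup_congr (hθ.inf_congr (hθ.refl a) hd₁c)
      (hθ.inf_congr hd₁c hd₂c)) (hθ.inf_congr hd₂c (hθ.refl a))

end Permute

theorem LatCon.permute_of_chain [Lattice X] {θ ψ : X → X → Prop} (hθ : LatCon X θ)
    (hψ : LatCon X ψ)
    (hθψ : ∀ a b c, a ≤ b → b ≤ c → θ a b → ψ b c → Relation.Comp ψ θ a c)
    (hψθ : ∀ a b c, a ≤ b → b ≤ c → ψ a b → θ b c → Relation.Comp θ ψ a c) :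
    Permute θ ψ := by
  refine .of_le hθ.symm hψ.symm fun a c ⟨b, hab, hbc⟩ => ?_
  obtain ⟨d, had, hd⟩ : Relation.Comp ψ θ a (a ⊔ b ⊔ c) :=
    hθψ a (a ⊔ b) _ le_sup_left le_sup_left
      (by simpa using hθ.sup_congr (hθ.refl a) hab)
      (by simpa [sup_assoc] using hψ.sup_congr (hψ.refl (a ⊔ b)) hbc)
  obtain ⟨e, hce, he⟩ : Relation.Comp θ ψ c (a ⊔ b ⊔ c) :=
    hψθ c (b ⊔ c) _ le_sup_right (sup_le_sup_right le_sup_right c)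
      (by simpa using hψ.sup_congr (hψ.symm hbc) (hψ.refl c))
      (by simpa [sup_assoc] using hθ.sup_congr (hθ.symm hab) (hθ.refl (b ⊔ c)))
  exact ⟨d ⊓ e, by simpa [sup_assoc] using hψ.inf_congr had (hψ.symm he),
    by simpa using hθ.inf_congr hd (hθ.symm hce)⟩

section JoinCon

/-- The join of a set `S` of congruences, as the reflexive transitive closure of its union. -/
def joinCon (S : Set (X → X → Prop)) : X → X → Prop :=
  Relation.ReflTransGen fun a b => ∃ φ ∈ S, φ a b

variable {S T : Set (X → X → Prop)}

theorem le_joinCon {φ : X → X → Prop} (hφ : φ ∈ S) : φ ≤ joinCon S :=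
  fun _ _ h => .single ⟨φ, hφ, h⟩

theorem joinCon_le {θ : X → X → Prop} (hθ : Equivalence θ) (h : ∀ φ ∈ S, φ ≤ θ) :
    joinCon S ≤ θ :=
  Relation.reflTransGen_le_of_equivalence_of_le hθ fun a b ⟨φ, hφ, hab⟩ => h φ hφ a b hab

theorem latCon_joinCon [Lattice L] {S : Set (L → L → Prop)} (hS : ∀ φ ∈ S, LatCon L φ) :
    LatCon L (joinCon S) := by
  have : Std.Symm fun a b => ∃ φ ∈ S, φ a b :=
    ⟨fun a b ⟨φ, hφ, hab⟩ => ⟨φ, hφ, (hS φ hφ).symm hab⟩⟩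
  have lift {f : L → L} (hf : ∀ φ ∈ S, ∀ a b, φ a b → φ (f a) (f b)) {a b : L}
      (h : joinCon S a b) : joinCon S (f a) (f b) :=
    Relation.ReflTransGen.lift f (fun a b ⟨φ, hφ, hab⟩ => ⟨φ, hφ, hf φ hφ a b hab⟩) a b h
  refine ⟨⟨fun _ => .refl, fun h => Relation.ReflTransGen.stdSymm.symm _ _ h, .trans⟩,
    fun a b c d hab hcd => ⟨?_, ?_⟩⟩
  · exact (lift (fun φ hφ _ _ h => (hS φ hφ).sup_congr h ((hS φ hφ).refl c)) hab).trans
      (lift (fun φ hφ _ _ h => (hS φ hφ).sup_congr ((hS φ hφ).refl b) h) hcd)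
  · exact (lift (fun φ hφ _ _ h => (hS φ hφ).inf_congr h ((hS φ hφ).refl c)) hab).trans
      (lift (fun φ hφ _ _ h => (hS φ hφ).inf_congr ((hS φ hφ).refl b) h) hcd)

theorem comp_reflTransGen_le {r s : X → X → Prop} (h : Relation.Comp r s ≤ Relation.Comp s r) :
    Relation.Comp r (Relation.ReflTransGen s) ≤ Relation.Comp (Relation.ReflTransGen s) r := by
  rintro a c ⟨b, hab, hbc⟩
  induction hbc with
  | refl => exact ⟨a, .refl, hab⟩
  | tail _ hcd ih =>
    obtain ⟨e, hae, hec⟩ := ih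
    obtain ⟨f, hef, hfd⟩ := h _ _ ⟨_, hec, hcd⟩
    exact ⟨f, hae.tail hef, hfd⟩

theorem reflTransGen_comp_le {r s : X → X → Prop} (h : Relation.Comp r s ≤ Relation.Comp s r) :
    Relation.Comp (Relation.ReflTransGen r) s ≤ Relation.Comp s (Relation.ReflTransGen r) := by
  rintro a c ⟨b, hab, hbc⟩
  induction hab using Relation.ReflTransGen.head_induction_on with
  | refl => exact ⟨c, hbc, .refl⟩
  | head had _ ih =>
    obtain ⟨e, hde, hec⟩ := ih
    obtain ⟨f, haf, hfe⟩ := h _ _ ⟨_, had, hde⟩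
    exact ⟨f, haf, hec.head hfe⟩

theorem permute_joinCon (h : ∀ φ ∈ S, ∀ χ ∈ T, Permute φ χ) :
    Permute (joinCon S) (joinCon T) := by
  have comp_le {S T : Set (X → X → Prop)} (h : ∀ φ ∈ S, ∀ χ ∈ T, Permute φ χ) :
      Relation.Comp (joinCon S) (joinCon T) ≤ Relation.Comp (joinCon T) (joinCon S) := by
    refine comp_reflTransGen_le (reflTransGen_comp_le ?_)
    rintro a c ⟨b, ⟨φ, hφ, hab⟩, χ, hχ, hbc⟩
    obtain ⟨d, had, hdc⟩ := (h φ hφ χ hχ).le a c ⟨b, hab, hbc⟩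
    exact ⟨d, ⟨χ, hχ, had⟩, φ, hφ, hdc⟩
  exact le_antisymm (comp_le h) (comp_le fun χ hχ φ hφ => (h φ hφ χ hχ).symm)

end JoinCon

end Congruences

/-! ### Boxes and their hulls -/

section Boxes

variable {A B : Type*} [Lattice A] [Lattice B] {a a' c : A} {b b' d : B} {H K P Q : Set (A × B)}

theorem boxe_mono (ha : a ≤ a') (hb : b ≤ b') : boxe A B a b ⊆ boxe A B a' b' :=
  fun _ hp => hp.imp ha.trans' hb.trans'

theorem botPairs_subset_boxe : botPairs A B ⊆ boxe A B a b :=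
  fun _ hp => hp.imp (fun h => h a) fun h => h b

theorem Iic_subset_btimes : Set.Iic (a, b) ⊆ btimes A B a b := fun _ hp => .inl hp

theorem btimes_mono (ha : a ≤ a') (hb : b ≤ b') : btimes A B a b ⊆ btimes A B a' b' :=
  Set.union_subset_union_left _ fun _ hp => ⟨hp.1.trans ha, hp.2.trans hb⟩

theorem btimes_subset_boxe_left : btimes A B a b ⊆ boxe A B a d :=
  Set.union_subset (fun _ hp => .inl hp.1) botPairs_subset_boxe

theorem btimes_subset_boxe_right : btimes A B a b ⊆ boxe A B c b :=
  Set.union_subset (fun _ hp => .inr hp.2) botPairs_subset_boxe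

theorem boxe_inter_boxe_subset :
    boxe A B a d ∩ boxe A B c b ⊆ boxe A B c d ∪ Set.Iic (a, b) := by
  rintro p ⟨hp | hp, hp' | hp'⟩
  exacts [.inl (.inl hp'), .inr ⟨hp, hp'⟩, .inl (.inr hp), .inl (.inr hp)]

theorem boxe_mem_boxProd (a : A) (b : B) : boxe A B a b ∈ boxProd A B :=
  ⟨{(a, b)}, Finset.singleton_nonempty _, by simp⟩

theorem inter_mem_boxProd (hH : H ∈ boxProd A B) (hK : K ∈ boxProd A B) :
    H ∩ K ∈ boxProd A B := by
  classical
  obtain ⟨F, hF, rfl⟩ := hH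
  obtain ⟨G, -, rfl⟩ := hK
  exact ⟨F ∪ G, hF.mono Finset.subset_union_left, by
    simp only [Finset.mem_union, Set.iInter_or, Set.iInter_inter_distrib]⟩

theorem inter_mem_ltens (hH : H ∈ ltens A B) (hK : K ∈ boxProd A B) : H ∩ K ∈ ltens A B :=
  let ⟨a, b, hab⟩ := hH.2
  ⟨inter_mem_boxProd hH.1 hK, a, b, Set.inter_subset_left.trans hab⟩

theorem exists_boxe_subset (hH : H ∈ boxProd A B) : ∃ c d, boxe A B c d ⊆ H := by
  obtain ⟨F, ⟨p, -⟩, rfl⟩ := hH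
  have : Nonempty (A × B) := ⟨p⟩
  obtain ⟨⟨c, d⟩, hcd⟩ := F.bddBelow
  exact ⟨c, d, Set.subset_iInter₂ fun q hq => boxe_mono (hcd hq).1 (hcd hq).2⟩

/-- The closure of a set of points under the boxes `a □ b`: the intersection of the boxes
containing it. -/
def boxHull (P : Set (A × B)) : Set (A × B) :=
  {p | ∀ a b, P ⊆ boxe A B a b → p ∈ boxe A B a b}

theorem subset_boxHull (P : Set (A × B)) : P ⊆ boxHull P := fun _ hp _ _ h => h hp

theorem boxHull_subset_boxe_iff : boxHull P ⊆ boxe A B a b ↔ P ⊆ boxe A B a b :=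
  ⟨(subset_boxHull P).trans, fun h _ hp => hp a b h⟩

theorem boxHull_subset_iff (hK : K ∈ boxProd A B) : boxHull P ⊆ K ↔ P ⊆ K := by
  obtain ⟨F, -, rfl⟩ := hK
  simp only [Set.subset_iInter_iff, boxHull_subset_boxe_iff]

theorem boxHull_mono (h : P ⊆ Q) : boxHull P ⊆ boxHull Q :=
  fun _ hp a b hQ => hp a b (h.trans hQ)

theorem boxHull_boxHull_union (P Q : Set (A × B)) :
    boxHull (boxHull P ∪ Q) = boxHull (P ∪ Q) :=
  Set.ext fun _ => forall₂_congr fun _ _ => imp_congr_left <| by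
    rw [Set.union_subset_iff, boxHull_subset_boxe_iff, Set.union_subset_iff]

theorem exists_finset_le_of_subset_boxe (I : Finset (A × B)) (c : A × B) :
    ∃ Q : Finset (A × B), Q.Nonempty ∧ (∀ q ∈ Q, ∀ p ∈ I, p.1 ≤ q.1 ∨ p.2 ≤ q.2) ∧
      ∀ r, c ≤ r → (∀ p ∈ I, p.1 ≤ r.1 ∨ p.2 ≤ r.2) → ∃ q ∈ Q, q ≤ r := by
  classical
  induction I using Finset.induction_on with
  | empty => exact ⟨{c}, Finset.singleton_nonempty c, by simp, fun r hr _ => ⟨c, by simp, hr⟩⟩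
  | insert p I _ ih =>
    obtain ⟨Q, hQ, hbox, hmin⟩ := ih
    refine ⟨Q.image (fun q => (q.1 ⊔ p.1, q.2)) ∪ Q.image (fun q => (q.1, q.2 ⊔ p.2)),
      (hQ.image _).mono Finset.subset_union_left, ?_, fun r hr hIr => ?_⟩
    · simp only [Finset.forall_mem_union, Finset.forall_mem_image, Finset.forall_mem_insert]
      exact
        ⟨fun q hq => ⟨.inl le_sup_right, fun i hi => (hbox q hq i hi).imp_left le_sup_of_le_left⟩,
          fun q hq => ⟨.inr le_sup_right, fun i hi => (hbox q hq i hi).imp_right le_sup_of_le_left⟩⟩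
    · obtain ⟨hp, hI⟩ := (Finset.forall_mem_insert _ _ _).1 hIr
      obtain ⟨q, hq, hqr⟩ := hmin r hr hI
      rcases hp with hp | hp
      · exact ⟨_, Finset.mem_union_left _ (Finset.mem_image_of_mem _ hq), sup_le hqr.1 hp, hqr.2⟩
      · exact ⟨_, Finset.mem_union_right _ (Finset.mem_image_of_mem _ hq), hqr.1, sup_le hqr.2 hp⟩

theorem boxHull_mem_boxProd {I : Finset (A × B)} (h : boxe A B c d ⊆ boxHull I) :
    boxHull (I : Set (A × B)) ∈ boxProd A B := by
  obtain ⟨Q, hQ, hbox, hmin⟩ := exists_finset_le_of_subset_boxe I (c, d)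
  refine ⟨Q, hQ, Set.Subset.antisymm
    (Set.subset_iInter₂ fun q hq => boxHull_subset_boxe_iff.2 (hbox q hq)) ?_⟩
  intro x hx u v huv
  have hcd : boxe A B c d ⊆ boxe A B u v := h.trans (boxHull_subset_boxe_iff.2 huv)
  by_contra hxuv
  have hcu : c ≤ u := (@hcd (c, x.2) (.inl le_rfl)).resolve_right fun hv => hxuv (.inr hv)
  have hdv : d ≤ v := (@hcd (x.1, d) (.inr le_rfl)).resolve_left fun hu => hxuv (.inl hu)
  obtain ⟨q, hq, hqr⟩ := hmin (u, v) ⟨hcu, hdv⟩ huv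
  exact hxuv (boxe_mono hqr.1 hqr.2 (Set.mem_iInter₂.1 hx q hq))

theorem exists_finset_boxHull_eq (hH : H ∈ ltens A B) :
    ∃ F : Finset (A × B), boxHull (F : Set (A × B)) = H := by
  obtain ⟨hHbox, a, b, hab⟩ := hH
  obtain ⟨I, -, hI⟩ := id hHbox
  -- In the order duals, the boxes containing the points of `I` become the points lying in the boxes
  -- of `I`.
  obtain ⟨Q, -, hQ, hmax⟩ := exists_finset_le_of_subset_boxe (A := Aᵒᵈ) (B := Bᵒᵈ) I (a, b)
  refine ⟨Q, Set.Subset.antisymm ((boxHull_subset_iff hHbox).2 fun q hq => ?_) ?_⟩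
  · rw [hI]
    exact Set.mem_iInter₂.2 (hQ q hq)
  · intro x hx u v hQuv
    rcases hab hx with hxab | hxbot
    · rw [hI] at hx
      obtain ⟨q, hq, hxq⟩ := hmax x hxab (Set.mem_iInter₂.1 hx)
      exact (hQuv hq).imp (le_trans hxq.1) (le_trans hxq.2)
    · exact botPairs_subset_boxe hxbot

theorem boxHull_union_mem_ltens (hH : H ∈ ltens A B) (P : Finset (A × B)) :
    boxHull (H ∪ P) ∈ ltens A B := by
  classical
  obtain ⟨c, d, hcd⟩ := exists_boxe_subset hH.1
  constructor
  · obtain ⟨F, rfl⟩ := exists_finset_boxHull_eq hH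
    rw [boxHull_boxHull_union, ← Finset.coe_union]
    exact boxHull_mem_boxProd (hcd.trans (boxHull_mono (by simp)))
  · obtain ⟨a, b, hab⟩ := hH.2
    have : Nonempty (A × B) := ⟨(a, b)⟩
    obtain ⟨⟨a', b'⟩, hP⟩ := (insert (a, b) P).bddAbove
    rw [Finset.coe_insert, upperBounds_insert] at hP
    have hHP : H ∪ P ⊆ btimes A B a' b' := Set.union_subset
      (hab.trans (btimes_mono hP.1.1 hP.1.2)) fun p hp => Iic_subset_btimes (hP.2 hp)
    refine ⟨a', b', fun p hp => ?_⟩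
    have hpd := hp a' d (hHP.trans btimes_subset_boxe_left)
    have hpc := hp c b' (hHP.trans btimes_subset_boxe_right)
    exact (boxe_inter_boxe_subset ⟨hpd, hpc⟩).elim (fun h => hHP (.inl (hcd h)))
      fun h => Iic_subset_btimes h

/-- When `A` or `B` has no zero the pure tensor `a ⊠ b` need not belong to `A ⊠ B`; the mixed tensor
`(a □ d) ∩ (c □ b)`, for a box `c □ d` contained in `H`, replaces it. -/
theorem exists_mem_ltens_subset_union_Iic (hH : H ∈ ltens A B) (p : A × B) :
    ∃ X ∈ ltens A B, p ∈ X ∧ X ⊆ H ∪ Set.Iic p := by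
  obtain ⟨c, d, hcd⟩ := exists_boxe_subset hH.1
  obtain ⟨a, b, hab⟩ := hH.2
  have hX : boxe A B p.1 d ∩ boxe A B c p.2 ⊆ H ∪ Set.Iic p :=
    boxe_inter_boxe_subset.trans (Set.union_subset_union_left _ hcd)
  refine ⟨_, ⟨inter_mem_boxProd (boxe_mem_boxProd _ _) (boxe_mem_boxProd _ _), a ⊔ p.1, b ⊔ p.2,
    hX.trans (Set.union_subset (hab.trans (btimes_mono le_sup_left le_sup_left))
      fun q hq => Iic_subset_btimes ⟨hq.1.trans le_sup_right, hq.2.trans le_sup_right⟩)⟩,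
    ⟨.inl le_rfl, .inr le_rfl⟩, hX⟩

end Boxes

/-! ### The lattice of tensors -/

/-- The lattice tensor product `A ⊠ B` as a type, each element being the set of its points. -/
def LatticeTensor (A B : Type*) [Lattice A] [Lattice B] : Type _ :=
  {H : Set (A × B) // H ∈ ltens A B}

namespace LatticeTensor

variable {A B : Type*} [Lattice A] [Lattice B] {x x' : A} {y : B} {p : A × B} {P : Finset (A × B)}
  {H K : LatticeTensor A B}

instance : SetLike (LatticeTensor A B) (A × B) := ⟨Subtype.val, Subtype.val_injective⟩

instance : PartialOrder (LatticeTensor A B) := .ofSetLike _ _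

theorem exists_eq_iInter_boxe (H : LatticeTensor A B) :
    ∃ F : Finset (A × B), (H : Set (A × B)) = ⋂ p ∈ F, boxe A B p.1 p.2 :=
  let ⟨F, _, hF⟩ := H.2.1
  ⟨F, hF⟩

theorem mem_of_le (H : LatticeTensor A B) {q : A × B} (hq : q ∈ H) (hpq : p ≤ q) : p ∈ H := by
  obtain ⟨F, hF⟩ := H.exists_eq_iInter_boxe
  rw [← SetLike.mem_coe, hF, Set.mem_iInter₂] at hq ⊢
  exact fun r hr => (hq r hr).imp (le_trans hpq.1) (le_trans hpq.2)

theorem sup_mem (hx : (x, y) ∈ H) (hx' : (x', y) ∈ H) : (x ⊔ x', y) ∈ H := by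
  obtain ⟨F, hF⟩ := H.exists_eq_iInter_boxe
  rw [← SetLike.mem_coe, hF, Set.mem_iInter₂] at hx hx' ⊢
  exact fun r hr => (hx r hr).elim (fun h => (hx' r hr).imp_left (sup_le h)) .inr

theorem exists_generators (H : LatticeTensor A B) :
    ∃ F : Finset (A × B), boxHull (F : Set (A × B)) = H :=
  exists_finset_boxHull_eq H.2

/-- A finite set of points whose box closure is `H`. -/
noncomputable def generators (H : LatticeTensor A B) : Finset (A × B) := H.exists_generators.choose

theorem boxHull_generators (H : LatticeTensor A B) : boxHull (H.generators : Set (A × B)) = H :=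
  H.exists_generators.choose_spec

theorem generators_subset_iff : (H.generators : Set (A × B)) ⊆ K ↔ H ≤ K := by
  rw [← boxHull_subset_iff (K := (K : Set (A × B))) K.2.1, boxHull_generators,
    SetLike.coe_subset_coe]

theorem mem_of_mem_generators (hp : p ∈ H.generators) : p ∈ H := generators_subset_iff.2 le_rfl hp

/-- The least element of `A ⊠ B` above `H` which contains the points of `P`. -/
def adjoin (H : LatticeTensor A B) (P : Finset (A × B)) : LatticeTensor A B :=
  ⟨boxHull (H ∪ P), boxHull_union_mem_ltens H.2 P⟩

theorem adjoin_le_iff : H.adjoin P ≤ K ↔ H ≤ K ∧ ∀ p ∈ P, p ∈ K :=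
  (boxHull_subset_iff K.2.1).trans Set.union_subset_iff

theorem le_adjoin (H : LatticeTensor A B) (P : Finset (A × B)) : H ≤ H.adjoin P :=
  (adjoin_le_iff.1 le_rfl).1

theorem mem_adjoin (hp : p ∈ P) : p ∈ H.adjoin P := (adjoin_le_iff.1 le_rfl).2 p hp

theorem adjoin_eq_boxHull (H : LatticeTensor A B) (P : Finset (A × B)) :
    (H.adjoin P : Set (A × B)) = boxHull (H.generators ∪ P) := by
  rw [← boxHull_boxHull_union, boxHull_generators]
  rfl

/-- The intersection of `H` with the box `a □ b`, which need not itself lie in `A ⊠ B`. -/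
def interBoxe (H : LatticeTensor A B) (a : A) (b : B) : LatticeTensor A B :=
  ⟨H ∩ boxe A B a b, inter_mem_ltens H.2 (boxe_mem_boxProd a b)⟩

noncomputable instance : Lattice (LatticeTensor A B) where
  sup H K := H.adjoin K.generators
  inf H K := ⟨H ∩ K, inter_mem_ltens H.2 K.2.1⟩
  le_sup_left H _ := H.le_adjoin _
  le_sup_right _ _ := generators_subset_iff.1 fun _ => mem_adjoin
  sup_le _ _ _ hH hK := adjoin_le_iff.2 ⟨hH, generators_subset_iff.2 hK⟩
  inf_le_left _ _ _ hp := hp.1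
  inf_le_right _ _ _ hp := hp.2
  le_inf _ _ _ hH hK _ hp := ⟨hH hp, hK hp⟩

theorem exists_mem_forall_mem_or_le (H : LatticeTensor A B) (p : A × B) :
    ∃ X : LatticeTensor A B, p ∈ X ∧ ∀ q ∈ X, q ∈ H ∨ q ≤ p :=
  let ⟨X, hX, hpX, hXH⟩ := exists_mem_ltens_subset_union_Iic H.2 p
  ⟨⟨X, hX⟩, hpX, hXH⟩

theorem swap_preimage_mem_ltens {H : Set (A × B)} (hH : H ∈ ltens A B) :
    Prod.swap ⁻¹' H ∈ ltens B A := by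
  classical
  obtain ⟨⟨F, hF, rfl⟩, a, b, hab⟩ := hH
  refine ⟨⟨F.image Prod.swap, hF.image _, ?_⟩, b, a, fun p hp => ?_⟩
  · ext p
    simp only [boxe, Set.mem_preimage, Set.mem_iInter, Finset.mem_image]
    exact ⟨fun h _ ⟨q, hq, hqp⟩ => hqp ▸ (h q hq).symm, fun h q hq => (h _ ⟨q, hq, rfl⟩).symm⟩
  · exact (hab hp).imp And.symm Or.symm

/-- The element of `B ⊠ A` obtained from `H` by exchanging the two factors. -/
def swap (H : LatticeTensor A B) : LatticeTensor B A :=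
  ⟨Prod.swap ⁻¹' H, swap_preimage_mem_ltens H.2⟩

/-- Exchange of the two factors as an isomorphism `A ⊠ B ≃ B ⊠ A`. -/
def swapIso : LatticeTensor A B ≃o LatticeTensor B A where
  toFun := swap
  invFun := swap
  left_inv _ := rfl
  right_inv _ := rfl
  map_rel_iff' {H K} := (Prod.swap_surjective.forall (p := fun p => p ∈ H → p ∈ K)).symm

end LatticeTensor

/-! ### Congruences induced by the factors -/

/-- `S` is contained in `T` up to moving first coordinates modulo `α`. -/
def SubsetModFst {A B : Type*} (α : A → A → Prop) (S T : Set (A × B)) : Prop :=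
  ∀ p ∈ S, ∃ x, α p.1 x ∧ (x, p.2) ∈ T

namespace SubsetModFst

variable {A B : Type*} {α : A → A → Prop} {S T U : Set (A × B)}

theorem union (hS : SubsetModFst α S U) (hT : SubsetModFst α T U) : SubsetModFst α (S ∪ T) U :=
  fun p hp => hp.elim (hS p) (hT p)

variable [Lattice A]

theorem of_subset (hα : LatCon A α) (h : S ⊆ T) : SubsetModFst α S T :=
  fun p hp => ⟨p.1, hα.refl p.1, h hp⟩

theorem trans (hα : LatCon A α) (hST : SubsetModFst α S T) (hTU : SubsetModFst α T U) :
    SubsetModFst α S U := fun p hp =>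
  let ⟨_, hpx, hx⟩ := hST p hp
  let ⟨y, hxy, hy⟩ := hTU _ hx
  ⟨y, hα.trans hpx hxy, hy⟩

variable [Lattice B]

theorem exists_subset_boxe (hα : LatCon A α) {F : Finset (A × B)} (h : SubsetModFst α F T) {a : A}
    {b : B} (hT : T ⊆ boxe A B a b) : ∃ a', α a a' ∧ (F : Set (A × B)) ⊆ boxe A B a' b := by
  refine hα.exists_forall_of_monotone (fun p _ _ ha => @boxe_mono _ _ _ _ _ _ b b ha le_rfl p) F
    fun p hp => ?_
  obtain ⟨x, hpx, hx⟩ := h p hp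
  rcases hT hx with hxa | hpb
  · exact ⟨a ⊔ p.1, by simpa [sup_eq_left.2 hxa] using hα.sup_congr (hα.refl a) (hα.symm hpx),
      .inl le_sup_right⟩
  · exact ⟨a, hα.refl a, .inr hpb⟩

theorem of_forall_boxe (hα : LatCon A α) (hT : T ∈ boxProd A B)
    (h : ∀ a b, T ⊆ boxe A B a b → ∃ a', α a a' ∧ S ⊆ boxe A B a' b) : SubsetModFst α S T := by
  obtain ⟨F, -, hF⟩ := hT
  intro p hp
  have hbox : ∀ q ∈ F, ∃ x, α p.1 x ∧ (x ≤ q.1 ∨ p.2 ≤ q.2) := fun q hq => by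
    obtain ⟨a, hqa, hSa⟩ := h q.1 q.2 (hF.trans_subset (Set.iInter₂_subset q hq))
    rcases hSa hp with hpa | hpb
    · exact ⟨p.1 ⊓ q.1, by simpa [inf_eq_left.2 hpa] using hα.inf_congr (hα.refl p.1) (hα.symm hqa),
        .inl inf_le_right⟩
    · exact ⟨p.1, hα.refl p.1, .inr hpb⟩
  obtain ⟨x, hpx, hx⟩ :=
    hα.exists_forall_of_antitone (Q := fun q x => x ≤ q.1 ∨ p.2 ≤ q.2)
      (fun _ _ _ hxx' => Or.imp_left hxx'.trans) F hbox
  exact ⟨x, hpx, hF ▸ Set.mem_iInter₂.2 hx⟩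

theorem boxHull (hα : LatCon A α) {F : Finset (A × B)} (hT : T ∈ boxProd A B)
    (h : SubsetModFst α F T) : SubsetModFst α (boxHull F) T :=
  .of_forall_boxe hα hT fun _ _ hab => (h.exists_subset_boxe hα hab).imp fun _ =>
    And.imp_right boxHull_subset_boxe_iff.2

end SubsetModFst

namespace LatticeTensor

variable {A B : Type*} [Lattice A] [Lattice B]

/-- The congruence of `A ⊠ B` induced by a congruence `α` of `A`: `H` and `K` contain each other up
to moving first coordinates modulo `α`. -/
def conFst (α : A → A → Prop) (H K : LatticeTensor A B) : Prop :=
  SubsetModFst α (H : Set (A × B)) K ∧ SubsetModFst α (K : Set (A × B)) H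

/-- The congruence of `A ⊠ B` induced by a congruence `β` of `B`, obtained from `conFst β` on
`B ⊠ A` by exchanging the factors. -/
def conSnd (β : B → B → Prop) : LatticeTensor A B → LatticeTensor A B → Prop :=
  Function.onFun (conFst β) swap

variable {α γ : A → A → Prop} {β δ : B → B → Prop}
  {H J K L : LatticeTensor A B} {P : Finset (A × B)}

theorem subsetModFst_adjoin (hα : LatCon A α) (hH : SubsetModFst α (H : Set (A × B)) K)
    (hP : SubsetModFst α (P : Set (A × B)) K) :
    SubsetModFst α (H.adjoin P : Set (A × B)) K := by
  classical
  have hgen : SubsetModFst α (H.generators : Set (A × B)) K :=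
    (SubsetModFst.of_subset hα (generators_subset_iff.2 le_rfl)).trans hα hH
  rw [adjoin_eq_boxHull, ← Finset.coe_union]
  exact .boxHull hα K.2.1 (by simpa only [Finset.coe_union] using hgen.union hP)

theorem subsetModFst_sup (hα : LatCon A α) (hH : SubsetModFst α (H : Set (A × B)) L)
    (hK : SubsetModFst α (K : Set (A × B)) L) :
    SubsetModFst α ((H ⊔ K : LatticeTensor A B) : Set (A × B)) L :=
  subsetModFst_adjoin hα hH
    ((SubsetModFst.of_subset hα (generators_subset_iff.2 le_rfl)).trans hα hK)

theorem subsetModFst_inf (hα : LatCon A α) (hK : SubsetModFst α (H : Set (A × B)) K)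
    (hL : SubsetModFst α (H : Set (A × B)) L) :
    SubsetModFst α (H : Set (A × B)) (K ⊓ L : LatticeTensor A B) := by
  intro p hp
  obtain ⟨x, hpx, hx⟩ := hK p hp
  obtain ⟨y, hpy, hy⟩ := hL p hp
  exact ⟨x ⊓ y, by simpa using hα.inf_congr hpx hpy, K.mem_of_le hx ⟨inf_le_left, le_rfl⟩,
    L.mem_of_le hy ⟨inf_le_right, le_rfl⟩⟩

theorem latCon_conFst (hα : LatCon A α) :
    LatCon (LatticeTensor A B) (conFst α) := by
  have mono {H K L M : LatticeTensor A B} (hHK : H ≤ K) (h : SubsetModFst α (K : Set (A × B)) L)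
      (hLM : L ≤ M) : SubsetModFst α (H : Set (A × B)) M :=
    ((SubsetModFst.of_subset hα hHK).trans hα h).trans hα (.of_subset hα hLM)
  refine ⟨⟨fun H => ⟨.of_subset hα subset_rfl, .of_subset hα subset_rfl⟩, fun h => And.symm h,
    fun h h' => ⟨h.1.trans hα h'.1, h'.2.trans hα h.2⟩⟩, fun H K H' K' h h' => ⟨⟨?_, ?_⟩, ?_, ?_⟩⟩
  · exact subsetModFst_sup hα (mono le_rfl h.1 le_sup_left) (mono le_rfl h'.1 le_sup_right)
  · exact subsetModFst_sup hα (mono le_rfl h.2 le_sup_left) (mono le_rfl h'.2 le_sup_right)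
  · exact subsetModFst_inf hα (mono inf_le_left h.1 le_rfl) (mono inf_le_right h'.1 le_rfl)
  · exact subsetModFst_inf hα (mono inf_le_left h.2 le_rfl) (mono inf_le_right h'.2 le_rfl)

theorem latCon_conSnd (hβ : LatCon B β) : LatCon (LatticeTensor A B) (conSnd β) :=
  (latCon_conFst hβ).onFun swapIso

theorem conFst_adjoin (hα : LatCon A α) (hP : SubsetModFst α (P : Set (A × B)) H) :
    conFst α H (H.adjoin P) :=
  ⟨.of_subset hα (H.le_adjoin P), subsetModFst_adjoin hα (.of_subset hα subset_rfl) hP⟩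

theorem conSnd_adjoin (hβ : LatCon B β) (hP : ∀ p ∈ P, ∃ y, β p.2 y ∧ (p.1, y) ∈ H) :
    conSnd β H (H.adjoin P) := by
  classical
  set E := H.swap.adjoin (P.image Prod.swap)
  have hE : conFst β H.swap E := conFst_adjoin hβ <| by
    rw [Finset.coe_image]
    exact Set.forall_mem_image.2 hP
  have hle : H.adjoin P ≤ E.swap := adjoin_le_iff.2
    ⟨swapIso.le_iff_le.1 (le_adjoin _ _), fun p hp => mem_adjoin (Finset.mem_image_of_mem _ hp)⟩
  exact ⟨.of_subset hβ (swapIso.monotone (H.le_adjoin P)),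
    (SubsetModFst.of_subset hβ (swapIso.monotone hle)).trans hβ hE.2⟩

/-- Only the finitely many generators of `K` have to be moved into `M`. -/
theorem exists_conFst_adjoin (hα : LatCon A α) (hHK : H ≤ K) {M : Set (A × B)}
    (h : ∀ p ∈ K, ∃ x ≤ p.1, α p.1 x ∧ (x, p.2) ∈ M) :
    ∃ P : Finset (A × B), (P : Set (A × B)) ⊆ M ∧ conFst α (H.adjoin P) K := by
  classical
  choose f hf_le hf hfM using fun p : K.generators => h p (mem_of_mem_generators p.2)
  set P : Finset (A × B) := Finset.univ.image fun p => (f p, p.1.2)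
  have hPK : H.adjoin P ≤ K := adjoin_le_iff.2 ⟨hHK, Finset.forall_mem_image.2 fun p _ =>
    K.mem_of_le (mem_of_mem_generators p.2) ⟨hf_le p, le_rfl⟩⟩
  refine ⟨P, fun q hq => ?_, .of_subset hα hPK, ?_⟩
  · obtain ⟨p, -, rfl⟩ := Finset.mem_image.1 hq
    exact hfM p
  · rw [← K.boxHull_generators]
    exact .boxHull hα (H.adjoin P).2.1 fun p hp => ⟨f ⟨p, hp⟩, hf ⟨p, hp⟩,
      mem_adjoin (Finset.mem_image_of_mem _ (Finset.mem_univ (⟨p, hp⟩ : K.generators)))⟩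

theorem comp_conFst_of_le (hα : LatCon A α) (hγ : LatCon A γ) (h : Permute α γ) (hHJ : H ≤ J)
    (hJK : J ≤ K) (hα' : conFst α H J) (hγ' : conFst γ J K) :
    Relation.Comp (conFst γ) (conFst α) H K := by
  obtain ⟨P, hPH, hPK⟩ := exists_conFst_adjoin hα (hHJ.trans hJK)
    (M := {p | ∃ x, γ p.1 x ∧ (x, p.2) ∈ H}) fun p hp => by
      obtain ⟨x, hpx, hx⟩ := hγ'.2 p hp
      obtain ⟨y, hxy, hy⟩ := hα'.2 _ hx
      obtain ⟨z, hpz, hzy⟩ := h.ge p.1 y ⟨x, hpx, hxy⟩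
      exact ⟨p.1 ⊓ z, inf_le_left, by simpa using hα.inf_congr (hα.refl p.1) hpz, p.1 ⊓ y,
        hγ.inf_congr (hγ.refl p.1) hzy, H.mem_of_le hy ⟨inf_le_right, le_rfl⟩⟩
  exact ⟨H.adjoin P, conFst_adjoin hγ hPH, hPK⟩

theorem permute_conFst (hα : LatCon A α) (hγ : LatCon A γ) (h : Permute α γ) :
    Permute (conFst (B := B) α) (conFst γ) :=
  (latCon_conFst hα).permute_of_chain (latCon_conFst hγ)
    (fun _ _ _ => comp_conFst_of_le hα hγ h) fun _ _ _ => comp_conFst_of_le hγ hα h.symm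

theorem permute_conSnd (hβ : LatCon B β) (hδ : LatCon B δ) (h : Permute β δ) :
    Permute (conSnd (A := A) β) (conSnd δ) :=
  (permute_conFst hβ hδ h).onFun swapIso.surjective

theorem comp_conSnd_conFst_of_le (hα : LatCon A α) (hδ : LatCon B δ) (hHJ : H ≤ J) (hJK : J ≤ K)
    (hα' : conFst α H J) (hδ' : conSnd δ J K) : Relation.Comp (conSnd δ) (conFst α) H K := by
  obtain ⟨P, hPH, hPK⟩ := exists_conFst_adjoin hα (hHJ.trans hJK)
    (M := {p | ∃ y, δ p.2 y ∧ (p.1, y) ∈ H}) fun p hp => by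
      obtain ⟨y, hpy, hy⟩ := hδ'.2 p.swap hp
      obtain ⟨x, hpx, hx⟩ := hα'.2 (p.1, y) hy
      exact ⟨p.1 ⊓ x, inf_le_left, by simpa using hα.inf_congr (hα.refl p.1) hpx, y, hpy,
        H.mem_of_le hx ⟨inf_le_right, le_rfl⟩⟩
  exact ⟨H.adjoin P, conSnd_adjoin hδ hPH, hPK⟩

theorem permute_conFst_conSnd (hα : LatCon A α) (hδ : LatCon B δ) :
    Permute (conFst α) (conSnd (A := A) δ) := by
  refine (latCon_conFst hα).permute_of_chain (latCon_conSnd hδ)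
    (fun _ _ _ => comp_conSnd_conFst_of_le hα hδ) fun H J K hHJ hJK hδ' hα' => ?_
  obtain ⟨D, hHD, hDK⟩ := comp_conSnd_conFst_of_le hδ hα (H := H.swap) (J := J.swap)
    (K := K.swap) (swapIso.monotone hHJ) (swapIso.monotone hJK) hδ' hα'
  exact ⟨D.swap, hHD, hDK⟩

end LatticeTensor

/-! ### Every congruence is a join of basic congruences -/

namespace LatticeTensor

variable {A B : Type*} [Lattice A] [Lattice B] {Θ : LatticeTensor A B → LatticeTensor A B → Prop}

/-- The union of the elements congruent to `H` modulo `Θ`. -/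
def saturation (Θ : LatticeTensor A B → LatticeTensor A B → Prop) (H : LatticeTensor A B) :
    Set (A × B) :=
  {p | ∃ K, Θ H K ∧ p ∈ K}

/-- Modulo `Θ`, the points `(a, d)` and `(c, b)` force the point `(a, b)`. For `c ≤ a` and `d ≤ b`
this is the congruence `(a ⊠ d) ⊔ (c ⊠ b) ≡ a ⊠ b`, stated so as to make sense without zeros. -/
def Fills (Θ : LatticeTensor A B → LatticeTensor A B → Prop) (c a : A) (d b : B) : Prop :=
  ∀ H : LatticeTensor A B, (a, d) ∈ H → (c, b) ∈ H → (a, b) ∈ saturation Θ H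

variable {G H K X : LatticeTensor A B} {a c x y z : A} {b d : B} {p q : A × B}

theorem mem_saturation_of_le (hpq : p ≤ q) (hq : q ∈ saturation Θ H) : p ∈ saturation Θ H :=
  hq.imp fun K => And.imp_right fun hqK => K.mem_of_le hqK hpq

theorem mem_saturation_of_inf_le (hΘ : LatCon (LatticeTensor A B) Θ) (hXG : X ⊓ G ≤ H)
    (hpX : p ∈ X) (hp : p ∈ saturation Θ G) : p ∈ saturation Θ H := by
  obtain ⟨K, hGK, hpK⟩ := hp
  have hHK : Θ (H ⊔ X ⊓ G) (H ⊔ X ⊓ K) := hΘ.sup_congr (hΘ.refl H) (hΘ.inf_congr (hΘ.refl X) hGK)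
  rw [sup_eq_left.2 hXG] at hHK
  exact ⟨_, hHK, le_sup_right (a := H) ⟨hpX, hpK⟩⟩

theorem exists_le_of_mem_saturation (hΘ : LatCon (LatticeTensor A B) Θ) (hp : p ∈ saturation Θ H) :
    ∃ K, H ≤ K ∧ Θ H K ∧ p ∈ K := by
  obtain ⟨K, hHK, hpK⟩ := hp
  exact ⟨H ⊔ K, le_sup_left, by simpa using hΘ.sup_congr (hΘ.refl H) hHK, le_sup_right (a := H) hpK⟩

theorem rel_of_subset_saturation (hΘ : LatCon (LatticeTensor A B) Θ) (hHK : H ≤ K)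
    (h : (K : Set (A × B)) ⊆ saturation Θ H) : Θ H K := by
  obtain ⟨L, hHL, hL⟩ := hΘ.exists_forall_of_monotone (Q := fun p L => p ∈ L)
    (fun _ _ _ hLM hp => hLM hp) K.generators fun p hp => h (mem_of_mem_generators hp)
  have hKL : K ≤ L := generators_subset_iff.1 hL
  simpa [inf_eq_left.2 hHK, inf_eq_right.2 hKL] using hΘ.inf_congr hHL (hΘ.refl K)

theorem fills_of_mem_saturation {y : B} (hΘ : LatCon (LatticeTensor A B) Θ)
    (hG : (G : Set (A × B)) ⊆ boxe A B a b) (hxy : (x, y) ∈ saturation Θ G) :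
    Fills Θ (a ⊓ x) x (b ⊓ y) y := by
  intro H hxb hay
  obtain ⟨X, hX, hXH⟩ := H.exists_mem_forall_mem_or_le (x, y)
  refine mem_saturation_of_inf_le hΘ (fun q hq => ?_) hX hxy
  rcases hXH q hq.1 with hqH | hqxy
  · exact hqH
  · exact (hG hq.2).elim (fun hqa => H.mem_of_le hay ⟨le_inf hqa hqxy.1, hqxy.2⟩)
      fun hqb => H.mem_of_le hxb ⟨hqxy.1, le_inf hqb hqxy.2⟩

namespace Fills

theorem inf (hΘ : LatCon (LatticeTensor A B) Θ) (hca : c ≤ a) (hdb : d ≤ b) (h : Fills Θ c a d b)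
    (t : A) : Fills Θ (c ⊓ t) (a ⊓ t) d b := by
  intro H
  obtain ⟨Y, hY, -⟩ := H.exists_mem_forall_mem_or_le (a, b)
  have hsat : (a, b) ∈ saturation Θ (Y.interBoxe c d) :=
    h _ ⟨Y.mem_of_le hY ⟨le_rfl, hdb⟩, .inr le_rfl⟩ ⟨Y.mem_of_le hY ⟨hca, le_rfl⟩, .inl le_rfl⟩
  have hfill : Fills Θ (c ⊓ (a ⊓ t)) (a ⊓ t) (d ⊓ b) b :=
    fills_of_mem_saturation hΘ Set.inter_subset_right
      (mem_saturation_of_le (Prod.mk_le_mk.2 ⟨inf_le_left, le_rfl⟩) hsat)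
  rw [← inf_assoc, inf_eq_left.2 hca, inf_eq_left.2 hdb] at hfill
  exact hfill H

theorem sup (hΘ : LatCon (LatticeTensor A B) Θ) (h : Fills Θ c a d b) (t : A) :
    Fills Θ (c ⊔ t) (a ⊔ t) d b := by
  intro H hatd hctb
  obtain ⟨K, hHK, hΘHK, hab⟩ := exists_le_of_mem_saturation hΘ
    (h H (H.mem_of_le hatd ⟨le_sup_left, le_rfl⟩) (H.mem_of_le hctb ⟨le_sup_left, le_rfl⟩))
  exact ⟨K, hΘHK, sup_mem hab (hHK (H.mem_of_le hctb ⟨le_sup_right, le_rfl⟩))⟩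

theorem trans (hΘ : LatCon (LatticeTensor A B) Θ) (hyz : y ≤ z) (hxy : Fills Θ x y d b)
    (h : Fills Θ y z d b) : Fills Θ x z d b := by
  intro H hzd hxb
  obtain ⟨K, hHK, hΘHK, hyb⟩ := exists_le_of_mem_saturation hΘ
    (hxy H (H.mem_of_le hzd ⟨hyz, le_rfl⟩) hxb)
  exact (h K (hHK hzd) hyb).imp fun _ => And.imp_left (hΘ.trans hΘHK)

theorem swap (h : Fills Θ c a d b) :
    Fills (Function.onFun Θ LatticeTensor.swap) d b c a := fun H hbc hda =>
  let ⟨K, hHK, hab⟩ := h H.swap hda hbc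
  ⟨K.swap, hHK, hab⟩

end Fills

theorem latCon_fills (hΘ : LatCon (LatticeTensor A B) Θ) (hdb : d ≤ b) :
    LatCon A fun x y => Fills Θ (x ⊓ y) (x ⊔ y) d b := by
  set r : A → A → Prop := fun x y => Fills Θ (x ⊓ y) (x ⊔ y) d b
  have hr {x y : A} (hxy : x ≤ y) : r x y ↔ Fills Θ x y d b := by
    simp only [r, inf_eq_left.2 hxy, sup_eq_right.2 hxy]
  have : Std.Refl r := ⟨fun x => (hr le_rfl).2 fun H _ h => ⟨H, hΘ.refl H, h⟩⟩
  let con : LatticeCon A := LatticeCon.mk' r (fun x y => (hr inf_le_sup).symm)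
    (fun {x y z} hxy hyz h h' => (hr (hxy.trans hyz)).2
      (((hr hxy).1 h).trans hΘ hyz ((hr hyz).1 h')))
    fun {x y t} hxy h =>
      ⟨(hr (inf_le_inf_right t hxy)).2 (((hr hxy).1 h).inf hΘ hxy hdb t),
        (hr (sup_le_sup_right hxy t)).2 (((hr hxy).1 h).sup hΘ t)⟩
  exact ⟨con.iseqv, fun _ _ _ _ h h' => ⟨con.sup h h', con.inf h h'⟩⟩

theorem latCon_fills_snd (hΘ : LatCon (LatticeTensor A B) Θ) (hca : c ≤ a) :
    LatCon B fun x y => Fills Θ c a (x ⊓ y) (x ⊔ y) := by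
  convert latCon_fills (hΘ.onFun (swapIso (A := B))) hca using 3
  exact ⟨Fills.swap, Fills.swap⟩

theorem exists_latCon_of_fills (hΘ : LatCon (LatticeTensor A B) Θ) (hca : c ≤ a) (hdb : d ≤ b)
    (h : Fills Θ c a d b) :
    ∃ α β, LatCon A α ∧ LatCon B β ∧ α c a ∧ β d b ∧
      ∀ x' x y' y, x' ≤ x → y' ≤ y → α x' x → β y' y → Fills Θ x' x y' y := by
  refine ⟨fun x' x => Fills Θ (x' ⊓ x) (x' ⊔ x) d b,
    fun y' y => ∀ r : {r : A × A // r.1 ≤ r.2 ∧ Fills Θ r.1 r.2 d b},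
      Fills Θ r.1.1 r.1.2 (y' ⊓ y) (y' ⊔ y),
    latCon_fills hΘ hdb, .iInter fun r => latCon_fills_snd hΘ r.2.1, ?_, fun r => ?_, ?_⟩
  · simpa only [inf_eq_left.2 hca, sup_eq_right.2 hca] using h
  · rw [inf_eq_left.2 hdb, sup_eq_right.2 hdb]
    exact r.2.2
  · intro x' x y' y hx hy hα hβ
    rw [inf_eq_left.2 hx, sup_eq_right.2 hx] at hα
    simpa only [inf_eq_left.2 hy, sup_eq_right.2 hy] using hβ ⟨(x', x), hx, hα⟩

/-- `φ` is the intersection of a congruence induced by `A` and a congruence induced by `B`; every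
congruence of `A ⊠ B` is a join of such. -/
def IsBasicCon (φ : LatticeTensor A B → LatticeTensor A B → Prop) : Prop :=
  ∃ α β, LatCon A α ∧ LatCon B β ∧ φ = conFst α ⊓ conSnd β

theorem IsBasicCon.latCon {φ : LatticeTensor A B → LatticeTensor A B → Prop}
    (hφ : IsBasicCon φ) : LatCon (LatticeTensor A B) φ := by
  obtain ⟨α, β, hα, hβ, rfl⟩ := hφ
  exact (latCon_conFst hα).inf (latCon_conSnd hβ)

theorem IsBasicCon.permute (hA : PermutableCongruences A) (hB : PermutableCongruences B)
    {φ χ : LatticeTensor A B → LatticeTensor A B → Prop} (hφ : IsBasicCon φ)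
    (hχ : IsBasicCon χ) : Permute φ χ := by
  have hφ' := hφ.latCon
  obtain ⟨α, β, hα, hβ, rfl⟩ := hφ
  obtain ⟨γ, δ, hγ, hδ, rfl⟩ := hχ
  refine .inf hφ' (latCon_conFst hγ) (latCon_conSnd hδ) ?_ ?_
  · exact (Permute.inf (latCon_conFst hγ) (latCon_conFst hα) (latCon_conSnd hβ)
      (permute_conFst hγ hα (hA γ α hγ hα)) (permute_conFst_conSnd hγ hβ)).symm
  · exact (Permute.inf (latCon_conSnd hδ) (latCon_conFst hα) (latCon_conSnd hβ)
      (permute_conFst_conSnd hα hδ).symm (permute_conSnd hδ hβ (hB δ β hδ hβ))).symm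

theorem exists_conFst_inf_conSnd_le_of_fills (hΘ : LatCon (LatticeTensor A B) Θ) (hca : c ≤ a)
    (hdb : d ≤ b) (h : Fills Θ c a d b) :
    ∃ α β, LatCon A α ∧ LatCon B β ∧ α c a ∧ β d b ∧ conFst α ⊓ conSnd β ≤ Θ := by
  obtain ⟨α, β, hα, hβ, hαca, hβdb, hfill⟩ := exists_latCon_of_fills hΘ hca hdb h
  refine ⟨α, β, hα, hβ, hαca, hβdb, ((latCon_conFst hα).inf (latCon_conSnd hβ)).le_of_forall_le hΘ
    fun H K hHK hφ => rel_of_subset_saturation hΘ hHK fun p hp => ?_⟩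
  obtain ⟨x, hpx, hx⟩ := hφ.1.2 p hp
  obtain ⟨y, hpy, hy⟩ := hφ.2.2 p.swap hp
  refine hfill (p.1 ⊓ x) p.1 (p.2 ⊓ y) p.2 inf_le_left inf_le_left ?_ ?_ H
    (H.mem_of_le hy ⟨le_rfl, inf_le_right⟩)
    (H.mem_of_le hx ⟨inf_le_right, le_rfl⟩)
  · simpa using hα.inf_congr (hα.refl p.1) (hα.symm hpx)
  · simpa using hβ.inf_congr (hβ.refl p.2) (hβ.symm hpy)

theorem exists_isBasicCon_interBoxe (hΘ : LatCon (LatticeTensor A B) Θ)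
    (hH : (H : Set (A × B)) ⊆ boxe A B a b) (hp : p ∈ saturation Θ H)
    (hX : ∀ q ∈ X, q ∈ H ∨ q ≤ p) :
    ∃ φ, IsBasicCon φ ∧ φ ≤ Θ ∧ φ X (X.interBoxe a b) := by
  obtain ⟨α, β, hα, hβ, hap, hbp, hle⟩ :=
    exists_conFst_inf_conSnd_le_of_fills hΘ inf_le_right inf_le_right
      (fills_of_mem_saturation hΘ hH hp)
  refine ⟨_, ⟨α, β, hα, hβ, rfl⟩, hle, ⟨fun q hq => ?_, .of_subset hα fun _ hq => hq.1⟩,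
    fun q hq => ?_, .of_subset hβ fun _ hq => hq.1⟩
  · rcases hX q hq with hqH | hqp
    · exact ⟨q.1, hα.refl _, hq, hH hqH⟩
    · refine ⟨q.1 ⊓ a, ?_, X.mem_of_le hq ⟨inf_le_left, le_rfl⟩, .inl inf_le_right⟩
      simpa [inf_left_comm q.1, inf_eq_left.2 hqp.1, inf_comm] using
        hα.inf_congr (hα.refl q.1) (hα.symm hap)
  · rcases hX q.swap hq with hqH | hqp
    · exact ⟨q.1, hβ.refl _, hq, hH hqH⟩
    · have hqp' : q.1 ≤ p.2 := hqp.2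
      refine ⟨q.1 ⊓ b, ?_, X.mem_of_le hq ⟨le_rfl, inf_le_left⟩, .inr inf_le_right⟩
      simpa [inf_left_comm q.1, inf_eq_left.2 hqp', inf_comm] using
        hβ.inf_congr (hβ.refl q.1) (hβ.symm hbp)

theorem eq_joinCon_isBasicCon (hΘ : LatCon (LatticeTensor A B) Θ) :
    Θ = joinCon {φ | IsBasicCon φ ∧ φ ≤ Θ} := by
  set Θ' := joinCon {φ | IsBasicCon φ ∧ φ ≤ Θ}
  have hΘ' : LatCon _ Θ' := latCon_joinCon fun φ hφ => hφ.1.latCon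
  refine le_antisymm (hΘ.le_of_forall_le hΘ' fun H K hHK hΘHK =>
    rel_of_subset_saturation hΘ' hHK fun p hp => ?_) (joinCon_le hΘ.1 fun φ hφ => hφ.2)
  obtain ⟨X, hpX, hX⟩ := H.exists_mem_forall_mem_or_le p
  obtain ⟨F, hF⟩ := H.exists_eq_iInter_boxe
  obtain ⟨Y, hXY, hY⟩ : ∃ Y, Θ' X Y ∧ ∀ r ∈ F, (Y : Set (A × B)) ⊆ boxe A B r.1 r.2 := by
    refine hΘ'.exists_forall_of_antitone (Q := fun r Y => (Y : Set (A × B)) ⊆ boxe A B r.1 r.2)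
      (fun _ _ _ hYZ => Set.Subset.trans hYZ) F fun r hr => ?_
    obtain ⟨φ, hφ, hφΘ, hφX⟩ := exists_isBasicCon_interBoxe (p := p) hΘ
      (hF.trans_subset (Set.iInter₂_subset r hr)) ⟨K, hΘHK, hp⟩ hX
    have hφΘ' : φ ≤ Θ' := le_joinCon ⟨hφ, hφΘ⟩
    exact ⟨X.interBoxe r.1 r.2, hφΘ' _ _ hφX, fun _ hq => hq.2⟩
  have hYH : Y ≤ H := (Set.subset_iInter₂ hY).trans_eq hF.symm
  have hHX : Θ' (H ⊔ Y) (H ⊔ X) := hΘ'.sup_congr (hΘ'.refl H) (hΘ'.symm hXY)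
  rw [sup_eq_left.2 hYH] at hHX
  exact ⟨H ⊔ X, hHX, le_sup_right (a := H) hpX⟩

theorem permutableCongruences (hA : PermutableCongruences A) (hB : PermutableCongruences B) :
    PermutableCongruences (LatticeTensor A B) := by
  intro Θ Ψ hΘ hΨ
  rw [eq_joinCon_isBasicCon hΘ, eq_joinCon_isBasicCon hΨ]
  exact permute_joinCon fun φ hφ χ hχ => hφ.1.permute hA hB hχ.1

end LatticeTensor

/-- If `A` and `B` are lattices with permutable congruences and `A ⊠ B` is nonempty,
then `A ⊠ B` has permutable congruences. -/
theorem ltens_permutable_congruences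
    (A B : Type*) [Lattice A] [Lattice B]
    (hne : (ltens A B).Nonempty)
    (hA : ∀ θ ψ : A → A → Prop, LatCon A θ → LatCon A ψ →
      ∀ a b : A, (∃ c, θ a c ∧ ψ c b) ↔ (∃ c, ψ a c ∧ θ c b))
    (hB : ∀ θ ψ : B → B → Prop, LatCon B θ → LatCon B ψ →
      ∀ a b : B, (∃ c, θ a c ∧ ψ c b) ↔ (∃ c, ψ a c ∧ θ c b)) :
    ∀ Θ Ψ : {H // H ∈ ltens A B} → {H // H ∈ ltens A B} → Prop,
      PosetLatCon Θ → PosetLatCon Ψ →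
      ∀ H K : {H // H ∈ ltens A B},
        (∃ J, Θ H J ∧ Ψ J K) ↔ (∃ J, Ψ H J ∧ Θ J K) := by
  intro Θ Ψ hΘ hΨ
  have hAB : PermutableCongruences (LatticeTensor A B) := LatticeTensor.permutableCongruences
    (fun θ ψ hθ hψ => permute_iff.2 (hA θ ψ hθ hψ)) fun θ ψ hθ hψ => permute_iff.2 (hB θ ψ hθ hψ)
  exact permute_iff.1 (hAB Θ Ψ (PosetLatCon.latCon (L := LatticeTensor A B) hΘ)
    (PosetLatCon.latCon (L := LatticeTensor A B) hΨ))
end
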